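/- Let n ≥ 1 and let F = n^{-1/2} · Σ_{j=1}^n w_j τ(w_j^{(0)}), where w_1,…,w_n, w_1^{(0)},…,w_n^{(0)} are i.i.d. standard Gaussian random variables and τ ∈ C²(ℝ) satisfies |τ(x)| ≤ a + b|x|^γ, |τ'(x)| ≤ a + b|x|^γ and |τ''(x)| ≤ a + b|x|^γ for all x ∈ ℝ, for some constants a, b, γ ≥ 0. Let σ² = E[τ²(Z)] where Z ~ N(0,1), and let N ~ N(0, σ²). Then for every n ≥ 1, d_{KS}(F, N) ≤ (1/√n) · (2/σ²) · √(3(1+√2)) · ‖a + b|Z|^γ‖_{L⁴}², where ‖X‖_{L⁴} = (E[X⁴])^{1/4}. -/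

import Mathlib

open MeasureTheory ProbabilityTheory Real

/-- The Kolmogorov–Smirnov distance between two distributions on `ℝ`:
`sup_z |P(X ≤ z) − P(Y ≤ z)|`. -/
noncomputable def dKS (μ ν : Measure ℝ) : ℝ :=
  ⨆ z : ℝ, |(μ (Set.Iic z)).toReal - (ν (Set.Iic z)).toReal|


/-! Freezing the hidden weights makes the output of the network a centred Gaussian variable whose
variance is the sample mean `V` of `τ²` over the hidden weights, so that `E[V] = σ²`. The
distribution functions at `z` of `N(0, t)` and `N(0, v)` are the values at `z / √t` and `z / √v` of
that of `N(0, 1)`, whose density decreases in `|x|`; hence they differ by at most `|t - v| / (2v)`.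
Averaging over `V` bounds the distance by `E|V - σ²| / (2σ²) ≤ √Var[V] / (2σ²)`, and
`Var[V] = Var[τ²(Z)] / n`. -/

section KolmogorovDistance

theorem dKS_le {μ ν : Measure ℝ} {r : ℝ}
    (h : ∀ z, |μ.real (Set.Iic z) - ν.real (Set.Iic z)| ≤ r) : dKS μ ν ≤ r :=
  ciSup_le h

theorem abs_measureReal_Iic_sub_le_dKS (μ ν : Measure ℝ) [IsProbabilityMeasure μ]
    [IsProbabilityMeasure ν] (z : ℝ) :
    |μ.real (Set.Iic z) - ν.real (Set.Iic z)| ≤ dKS μ ν := by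
  refine le_ciSup (f := fun z => |μ.real (Set.Iic z) - ν.real (Set.Iic z)|) ⟨1, ?_⟩ z
  rintro _ ⟨x, rfl⟩
  exact abs_sub_le_of_nonneg_of_le measureReal_nonneg measureReal_le_one measureReal_nonneg
    measureReal_le_one

theorem dKS_comm (μ ν : Measure ℝ) : dKS μ ν = dKS ν μ :=
  iSup_congr fun _ => abs_sub_comm _ _

theorem dKS_self (μ : Measure ℝ) : dKS μ μ = 0 := by
  simp only [dKS, sub_self, abs_zero, ciSup_const]

theorem measureReal_bind {α β : Type*} {mα : MeasurableSpace α} {mβ : MeasurableSpace β}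
    (P : Measure α) {κ : α → Measure β} [∀ a, IsFiniteMeasure (κ a)] (hκ : Measurable κ)
    {s : Set β} (hs : MeasurableSet s) : (P.bind κ).real s = ∫ a, (κ a).real s ∂P := by
  rw [measureReal_def, Measure.bind_apply hs hκ.aemeasurable]
  exact (integral_toReal ((Measure.measurable_coe hs).comp hκ).aemeasurable
    (ae_of_all _ fun a => measure_lt_top (κ a) s)).symm

theorem dKS_bind_le {α : Type*} {mα : MeasurableSpace α} {P : Measure α} [IsProbabilityMeasure P]
    {κ : α → Measure ℝ} [∀ a, IsProbabilityMeasure (κ a)] (hκ : Measurable κ) {ν : Measure ℝ}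
    [IsProbabilityMeasure ν] {g : α → ℝ} (hg : Integrable g P)
    (h : ∀ᵐ a ∂P, dKS (κ a) ν ≤ g a) : dKS (P.bind κ) ν ≤ ∫ a, g a ∂P := by
  refine dKS_le fun z => ?_
  have hint : Integrable (fun a => (κ a).real (Set.Iic z)) P :=
    have : IsMarkovKernel (⟨κ, hκ⟩ : Kernel α ℝ) := ⟨inferInstance⟩
    Kernel.IsMarkovKernel.integrable P ⟨κ, hκ⟩ measurableSet_Iic
  calc |(P.bind κ).real (Set.Iic z) - ν.real (Set.Iic z)|
      = |∫ a, ((κ a).real (Set.Iic z) - ν.real (Set.Iic z)) ∂P| := by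
        rw [measureReal_bind P hκ measurableSet_Iic, integral_sub hint (integrable_const _),
          integral_const, probReal_univ, one_smul]
    _ ≤ ∫ a, |(κ a).real (Set.Iic z) - ν.real (Set.Iic z)| ∂P := abs_integral_le_integral_abs
    _ ≤ ∫ a, g a ∂P := integral_mono_ae (hint.sub (integrable_const _)).abs hg <| by
        filter_upwards [h] with a ha
        exact (abs_measureReal_Iic_sub_le_dKS (κ a) ν z).trans ha

end KolmogorovDistance

section SymmetricLaw

variable {μ ν : Measure ℝ} [IsProbabilityMeasure μ] [μ.IsNegInvariant] {x : ℝ}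

theorem measureReal_Ici_neg (μ : Measure ℝ) [μ.IsNegInvariant] (x : ℝ) :
    μ.real (Set.Ici (-x)) = μ.real (Set.Iic x) := by
  rw [← Set.neg_Iic, measureReal_def, Measure.measure_neg, measureReal_def]

theorem one_half_le_measureReal_Iic (hx : 0 ≤ x) : 1 / 2 ≤ μ.real (Set.Iic x) := by
  have hcover : Set.Iic x ∪ Set.Ici (-x) = Set.univ :=
    Set.Iic_union_Ici_of_le (by linarith)
  have hunion := measureReal_union_le (μ := μ) (Set.Iic x) (Set.Ici (-x))
  rw [hcover, probReal_univ, measureReal_Ici_neg] at hunion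
  linarith

theorem measureReal_Iic_le_one_half (hx : x < 0) : μ.real (Set.Iic x) ≤ 1 / 2 := by
  have hdisj : Disjoint (Set.Iic x) (Set.Ici (-x)) :=
    Set.Iic_disjoint_Ici.mpr (by linarith)
  have hunion := measureReal_union (μ := μ) hdisj measurableSet_Ici
  rw [measureReal_Ici_neg] at hunion
  linarith [measureReal_le_one (μ := μ) (s := Set.Iic x ∪ Set.Ici (-x))]

theorem abs_measureReal_Iic_sub_le_one_half [IsProbabilityMeasure ν] [ν.IsNegInvariant] (x : ℝ) :
    |μ.real (Set.Iic x) - ν.real (Set.Iic x)| ≤ 1 / 2 := by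
  rw [abs_sub_le_iff]
  rcases le_or_gt 0 x with hx | hx
  · have hμ := one_half_le_measureReal_Iic (μ := μ) hx
    have hν := one_half_le_measureReal_Iic (μ := ν) hx
    constructor <;> linarith [measureReal_le_one (μ := μ) (s := Set.Iic x),
      measureReal_le_one (μ := ν) (s := Set.Iic x)]
  · have hμ := measureReal_Iic_le_one_half (μ := μ) hx
    have hν := measureReal_Iic_le_one_half (μ := ν) hx
    constructor <;> linarith [measureReal_nonneg (μ := μ) (s := Set.Iic x),
      measureReal_nonneg (μ := ν) (s := Set.Iic x)]

end SymmetricLaw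

section GaussianComparison

open scoped NNReal

instance isNegInvariant_gaussianReal (v : ℝ≥0) : (gaussianReal 0 v).IsNegInvariant :=
  ⟨by rw [Measure.neg_def, gaussianReal_map_neg, neg_zero]⟩

theorem gaussianPDFReal_zero_neg (v : ℝ≥0) (x : ℝ) :
    gaussianPDFReal 0 v (-x) = gaussianPDFReal 0 v x := by
  simp only [gaussianPDFReal, sub_zero, neg_sq]

theorem antitoneOn_gaussianPDFReal_zero (v : ℝ≥0) :
    AntitoneOn (gaussianPDFReal 0 v) (Set.Ici 0) := by
  intro x hx y _ hxy
  rw [Set.mem_Ici] at hx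
  simp only [gaussianPDFReal, sub_zero]
  gcongr

theorem gaussianReal_real_Iic_sub (m : ℝ) {v : ℝ≥0} (hv : v ≠ 0) (x y : ℝ) :
    (gaussianReal m v).real (Set.Iic y) - (gaussianReal m v).real (Set.Iic x)
      = ∫ u in x..y, gaussianPDFReal m v u := by
  have hreal (z : ℝ) :
      (gaussianReal m v).real (Set.Iic z) = ∫ u in Set.Iic z, gaussianPDFReal m v u := by
    rw [measureReal_def, gaussianReal_apply_eq_integral m hv, ENNReal.toReal_ofReal
      (integral_nonneg fun u => gaussianPDFReal_nonneg m v u)]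
  rw [hreal, hreal]
  exact intervalIntegral.integral_Iic_sub_Iic (integrable_gaussianPDFReal m v).integrableOn
    (integrable_gaussianPDFReal m v).integrableOn

theorem mul_integral_le_integral_mul_of_antitoneOn {f : ℝ → ℝ} (hf : AntitoneOn f (Set.Ici 0))
    {c x : ℝ} (hc₀ : 0 ≤ c) (hc₁ : c ≤ 1) (hx : 0 ≤ x) :
    c * ∫ u in 0..x, f u ≤ ∫ u in 0..c * x, f u := by
  have hscale : AntitoneOn (fun u => f (c * u)) (Set.Ici 0) := fun u hu w hw huw =>
    hf (mul_nonneg hc₀ hu) (mul_nonneg hc₀ hw) (mul_le_mul_of_nonneg_left huw hc₀)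
  have hsub : Set.uIcc 0 x ⊆ Set.Ici 0 := by
    rw [Set.uIcc_of_le hx]; exact Set.Icc_subset_Ici_self
  have hmono : ∫ u in 0..x, f u ≤ ∫ u in 0..x, f (c * u) :=
    intervalIntegral.integral_mono_on hx (hf.mono hsub).intervalIntegrable
      (hscale.mono hsub).intervalIntegrable fun u hu =>
        hf (mul_nonneg hc₀ hu.1) hu.1 (mul_le_of_le_one_left hu.1 hc₁)
  calc c * ∫ u in 0..x, f u ≤ c * ∫ u in 0..x, f (c * u) := mul_le_mul_of_nonneg_left hmono hc₀
    _ = ∫ u in 0..c * x, f u := by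
      rw [intervalIntegral.mul_integral_comp_mul_left, mul_zero]

theorem abs_integral_gaussianPDFReal_mul_le {v : ℝ≥0} (hv : v ≠ 0) {c : ℝ} (hc₀ : 0 ≤ c)
    (hc₁ : c ≤ 1) (x : ℝ) : |∫ u in c * x..x, gaussianPDFReal 0 v u| ≤ (1 - c) / 2 := by
  wlog hx : 0 ≤ x generalizing x
  · have heven : ∫ u in c * -x..-x, gaussianPDFReal 0 v u
        = -∫ u in c * x..x, gaussianPDFReal 0 v u := by
      rw [mul_neg, ← intervalIntegral.integral_comp_neg, intervalIntegral.integral_symm]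
      simp only [gaussianPDFReal_zero_neg]
    rw [← abs_neg, ← heven]
    exact this (-x) (by linarith)
  have hint (a b : ℝ) : IntervalIntegrable (gaussianPDFReal 0 v) volume a b :=
    (integrable_gaussianPDFReal 0 v).intervalIntegrable
  have hhalf : ∫ u in 0..x, gaussianPDFReal 0 v u ≤ 1 / 2 := by
    rw [← gaussianReal_real_Iic_sub 0 hv]
    linarith [measureReal_le_one (μ := gaussianReal 0 v) (s := Set.Iic x),
      one_half_le_measureReal_Iic (μ := gaussianReal 0 v) le_rfl]
  have hscale := mul_integral_le_integral_mul_of_antitoneOn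
    (antitoneOn_gaussianPDFReal_zero v) hc₀ hc₁ hx
  have hsplit := intervalIntegral.integral_add_adjacent_intervals (hint 0 (c * x)) (hint (c * x) x)
  have hnonneg : 0 ≤ ∫ u in c * x..x, gaussianPDFReal 0 v u :=
    intervalIntegral.integral_nonneg (mul_le_of_le_one_left hx hc₁)
      fun u _ => gaussianPDFReal_nonneg 0 v u
  rw [abs_of_nonneg hnonneg]
  nlinarith

theorem gaussianReal_real_Iic_mul (v : ℝ≥0) {c : ℝ≥0} (hc : c ≠ 0) (z : ℝ) :
    (gaussianReal 0 (c ^ 2 * v)).real (Set.Iic (c * z))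
      = (gaussianReal 0 v).real (Set.Iic z) := by
  have hlaw : (gaussianReal 0 v).map ((c : ℝ) * ·) = gaussianReal 0 (c ^ 2 * v) := by
    rw [gaussianReal_map_const_mul, mul_zero]
    rfl
  have hpreimage : ((c : ℝ) * ·) ⁻¹' Set.Iic (c * z) = Set.Iic z := by
    ext x
    exact mul_le_mul_iff_right₀ (NNReal.coe_pos.mpr (pos_iff_ne_zero.mpr hc))
  rw [← hlaw, map_measureReal_apply (by fun_prop) measurableSet_Iic, hpreimage]

theorem dKS_gaussianReal_sq_mul_le {v c : ℝ≥0} (hv : v ≠ 0) (hc : c ≤ 1) :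
    dKS (gaussianReal 0 (c ^ 2 * v)) (gaussianReal 0 v) ≤ (1 - c) / 2 := by
  refine dKS_le fun z => ?_
  rcases eq_or_ne c 0 with rfl | hc₀
  · simpa only [NNReal.coe_zero, sub_zero] using abs_measureReal_Iic_sub_le_one_half z
  · obtain ⟨y, rfl⟩ : ∃ y, z = c * y :=
      ⟨z / c, (mul_div_cancel₀ z (NNReal.coe_ne_zero.mpr hc₀)).symm⟩
    rw [gaussianReal_real_Iic_mul v hc₀, gaussianReal_real_Iic_sub 0 hv]
    exact abs_integral_gaussianPDFReal_mul_le hv c.coe_nonneg (NNReal.coe_le_one.mpr hc) y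

theorem dKS_gaussianReal_le_of_le {t v : ℝ≥0} (hv : v ≠ 0) (htv : t ≤ v) :
    dKS (gaussianReal 0 t) (gaussianReal 0 v) ≤ (v - t) / (2 * v) := by
  obtain ⟨c, rfl⟩ : ∃ c : ℝ≥0, t = c ^ 2 * v :=
    ⟨NNReal.sqrt (t / v), by rw [NNReal.sq_sqrt, div_mul_cancel₀ t hv]⟩
  have hc : c ≤ 1 := by
    rw [← sq_le_one_iff₀ zero_le]
    exact (mul_le_iff_le_one_left (pos_iff_ne_zero.mpr hv)).mp htv
  have hc_sq : (c : ℝ) ^ 2 ≤ c := mod_cast pow_le_of_le_one zero_le hc two_ne_zero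
  calc dKS (gaussianReal 0 (c ^ 2 * v)) (gaussianReal 0 v)
      ≤ (1 - c) / 2 := dKS_gaussianReal_sq_mul_le hv hc
    _ ≤ (1 - c ^ 2) / 2 := by linarith
    _ = (v - (c ^ 2 * v : ℝ≥0)) / (2 * v) := by push_cast; field_simp

theorem dKS_gaussianReal_le (t : ℝ≥0) {v : ℝ≥0} (hv : v ≠ 0) :
    dKS (gaussianReal 0 t) (gaussianReal 0 v) ≤ |(t : ℝ) - v| / (2 * v) := by
  rcases le_total t v with htv | hvt
  · rw [abs_sub_comm, abs_of_nonneg (sub_nonneg.mpr (NNReal.coe_le_coe.mpr htv))]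
    exact dKS_gaussianReal_le_of_le hv htv
  · have hsub : (0 : ℝ) ≤ t - v := sub_nonneg.mpr (NNReal.coe_le_coe.mpr hvt)
    rw [dKS_comm, abs_of_nonneg hsub]
    calc dKS (gaussianReal 0 v) (gaussianReal 0 t) ≤ (t - v) / (2 * t) :=
          dKS_gaussianReal_le_of_le (ne_bot_of_le_ne_bot hv hvt) hvt
      _ ≤ (t - v) / (2 * v) := by gcongr

end GaussianComparison

section GaussianMixture

variable {α : Type*} {mα : MeasurableSpace α} {P : Measure α} [IsProbabilityMeasure P]

theorem integral_abs_sub_integral_le_sqrt_variance {X : α → ℝ} (hX : MemLp X 2 P) :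
    ∫ a, |X a - P[X]| ∂P ≤ √Var[X; P] := by
  have hdev : MemLp (fun a => |X a - P[X]|) 2 P := (hX.sub (memLp_const _)).abs
  have hjensen := variance_nonneg (fun a => |X a - P[X]|) P
  rw [variance_eq_sub hdev] at hjensen
  simp only [Pi.pow_apply, sq_abs] at hjensen
  rw [← variance_eq_integral hX.aemeasurable] at hjensen
  exact Real.le_sqrt_of_sq_le (sub_nonneg.mp hjensen)

theorem dKS_bind_gaussianReal_le {V : α → ℝ} (hmeas : Measurable V) (hV₀ : 0 ≤ V)
    (hV : MemLp V 2 P) :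
    dKS (P.bind fun a => gaussianReal 0 (V a).toNNReal) (gaussianReal 0 P[V].toNNReal)
      ≤ √Var[V; P] / (2 * P[V]) := by
  have hint : Integrable V P := hV.integrable one_le_two
  have hmean₀ : 0 ≤ P[V] := integral_nonneg hV₀
  have hcond : ∀ᵐ a ∂P, dKS (gaussianReal 0 (V a).toNNReal) (gaussianReal 0 P[V].toNNReal)
      ≤ |V a - P[V]| / (2 * P[V]) := by
    rcases hmean₀.eq_or_lt with hmean | hmean
    · filter_upwards [(integral_eq_zero_iff_of_nonneg hV₀ hint).mp hmean.symm] with a ha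
      rw [ha, ← hmean, Pi.zero_apply, dKS_self]
      positivity
    · refine ae_of_all _ fun a => ?_
      have h := dKS_gaussianReal_le (V a).toNNReal (Real.toNNReal_pos.mpr hmean).ne'
      rwa [Real.coe_toNNReal _ (hV₀ a), Real.coe_toNNReal _ hmean₀] at h
  calc _ ≤ ∫ a, |V a - P[V]| / (2 * P[V]) ∂P :=
        dKS_bind_le (by fun_prop) ((hint.sub (integrable_const _)).abs.div_const _) hcond
    _ = (∫ a, |V a - P[V]| ∂P) / (2 * P[V]) := integral_div _ _
    _ ≤ √Var[V; P] / (2 * P[V]) := by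
        gcongr
        exact integral_abs_sub_integral_le_sqrt_variance hV

end GaussianMixture

section RandomFeatures

theorem map_prod_eq_bind {α β γ : Type*} {mα : MeasurableSpace α} {mβ : MeasurableSpace β}
    {mγ : MeasurableSpace γ} (μ : Measure α) [SFinite μ] (ν : Measure β) [SFinite ν]
    {f : α × β → γ} (hf : Measurable f) :
    (μ.prod ν).map f = ν.bind fun b => μ.map fun a => f (a, b) := by
  have hsection (b : β) : μ.map (fun a => f (a, b)) = (μ.map fun a => (a, b)).map f :=
    (Measure.map_map hf measurable_prodMk_right).symm
  have hmeas : Measurable fun b => μ.map fun a => f (a, b) := by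
    simp only [hsection]
    exact (Measure.measurable_map f hf).comp Measurable.map_prodMk_right
  ext s hs
  rw [Measure.map_apply hf hs, Measure.prod_apply_symm (hf hs),
    Measure.bind_apply hs hmeas.aemeasurable]
  refine lintegral_congr fun b => ?_
  rw [hsection, Measure.map_apply hf hs, Measure.map_apply measurable_prodMk_right (hf hs)]

theorem map_sum_mul_pi_gaussianReal {ι : Type*} [Fintype ι] (m : ι → ℝ) (v : ι → NNReal)
    (c : ι → ℝ) :
    (Measure.pi fun i => gaussianReal (m i) (v i)).map (fun w => ∑ i, w i * c i)
      = gaussianReal (∑ i, m i * c i) (∑ i, v i * c i ^ 2).toNNReal := by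
  have hmem (i : ι) : MemLp (fun x : ℝ => x * c i) 2 (gaussianReal (m i) (v i)) :=
    (memLp_id_gaussianReal 2).mul_const (c i)
  have heval (i : ι) := measurePreserving_eval (fun i => gaussianReal (m i) (v i)) i
  have hlaw : HasGaussianLaw (fun w : ι → ℝ => ∑ i, w i * c i)
      (Measure.pi fun i => gaussianReal (m i) (v i)) :=
    (iIndepFun_pi fun i => (hmem i).aemeasurable).hasGaussianLaw_fun_sum fun i =>
      (gaussianReal_mul_const ⟨(heval i).aemeasurable, (heval i).map_eq⟩ (c i)).hasGaussianLaw
  have hmean : ∫ w : ι → ℝ, ∑ i, w i * c i ∂(Measure.pi fun i => gaussianReal (m i) (v i))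
      = ∑ i, m i * c i := by
    have hint (i : ι) :
        Integrable (fun w : ι → ℝ => w i * c i) (Measure.pi fun i => gaussianReal (m i) (v i)) :=
      ((hmem i).comp_measurePreserving (heval i)).integrable one_le_two
    rw [integral_finsetSum _ fun i _ => hint i]
    refine Finset.sum_congr rfl fun i _ => ?_
    calc ∫ w : ι → ℝ, w i * c i ∂(Measure.pi fun i => gaussianReal (m i) (v i))
        = ∫ x, x * c i ∂(gaussianReal (m i) (v i)) :=
          integral_comp_eval (μ := fun i => gaussianReal (m i) (v i)) (hmem i).aestronglyMeasurable
      _ = m i * c i := by rw [integral_mul_const, integral_id_gaussianReal]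
  have hvar : Var[fun w : ι → ℝ => ∑ i, w i * c i; Measure.pi fun i => gaussianReal (m i) (v i)]
      = ∑ i, v i * c i ^ 2 := by
    have hsum : (fun w : ι → ℝ => ∑ i, w i * c i) = ∑ i, fun w : ι → ℝ => w i * c i := by
      ext w; simp only [Finset.sum_apply]
    rw [hsum, variance_sum_pi hmem]
    refine Finset.sum_congr rfl fun i _ => ?_
    rw [variance_mul_const, variance_fun_id_gaussianReal]
  rw [hlaw.map_eq_gaussianReal, hmean, hvar]

theorem memLp_sq {E : Type*} {mE : MeasurableSpace E} {μ : Measure E} {f : E → ℝ} {p : ENNReal}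
    (hf : MemLp f (p * 2) μ) : MemLp (fun y => f y ^ 2) p μ := by
  have h := hf.norm_rpow_div 2
  simpa only [ENNReal.mul_div_cancel_right two_ne_zero ENNReal.ofNat_ne_top, ENNReal.toReal_ofNat,
    Real.rpow_ofNat, Real.norm_eq_abs, sq_abs] using h

/-- The empirical mean of `f` over a sample `x` of size `n`, with value `0` for `n = 0`. At
`f = τ ^ 2` it is the variance of the output of the network with hidden weights `x`. -/
noncomputable def sampleMean {E : Type*} {n : ℕ} (f : E → ℝ) (x : Fin n → E) : ℝ :=
  (n : ℝ)⁻¹ * ∑ j, f (x j)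

variable {E : Type*} {mE : MeasurableSpace E} {μ : Measure E} [IsProbabilityMeasure μ] {n : ℕ}
  {f τ : E → ℝ}

theorem memLp_sampleMean {p : ENNReal} (hf : MemLp f p μ) :
    MemLp (sampleMean f) p (Measure.pi fun _ : Fin n => μ) :=
  (memLp_finsetSum _ fun j _ =>
    hf.comp_measurePreserving (measurePreserving_eval (fun _ : Fin n => μ) j)).const_mul _

theorem integral_sampleMean (hn : n ≠ 0) (hf : Integrable f μ) :
    ∫ x, sampleMean f x ∂(Measure.pi fun _ : Fin n => μ) = ∫ y, f y ∂μ := by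
  have hn' : (n : ℝ) ≠ 0 := Nat.cast_ne_zero.mpr hn
  have hcoord (j : Fin n) : ∫ x, f (x j) ∂(Measure.pi fun _ : Fin n => μ) = ∫ y, f y ∂μ :=
    integral_comp_eval (μ := fun _ : Fin n => μ) hf.aestronglyMeasurable
  simp only [sampleMean]
  rw [integral_const_mul, integral_finsetSum _ fun j _ => integrable_comp_eval hf]
  simp only [hcoord, Finset.sum_const, Finset.card_univ, Fintype.card_fin, nsmul_eq_mul,
    inv_mul_cancel_left₀ hn']

theorem variance_sampleMean (hf : MemLp f 2 μ) :
    Var[sampleMean f; Measure.pi fun _ : Fin n => μ] = (n : ℝ)⁻¹ * Var[f; μ] := by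
  have hsum : (fun x : Fin n → E => ∑ j, f (x j)) = ∑ j, fun x : Fin n → E => f (x j) :=
    by ext x; simp only [Finset.sum_apply]
  calc Var[sampleMean f; Measure.pi fun _ : Fin n => μ]
      = (n : ℝ)⁻¹ ^ 2 * Var[∑ j, fun x : Fin n → E => f (x j); Measure.pi fun _ => μ] := by
        rw [← hsum]; exact variance_const_mul _ _ _
    _ = (n : ℝ)⁻¹ ^ 2 * (n * Var[f; μ]) := by
        rw [variance_sum_pi fun _ => hf, Finset.sum_const, Finset.card_univ, Fintype.card_fin,
          nsmul_eq_mul]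
    _ = (n : ℝ)⁻¹ * Var[f; μ] := by
        rcases eq_or_ne n 0 with rfl | hn
        · simp only [Nat.cast_zero, inv_zero, zero_mul, mul_zero]
        · field_simp

theorem map_shallow_network_eq_bind (hτ : Measurable τ) :
    ((Measure.pi fun _ : Fin n => gaussianReal 0 1).prod (Measure.pi fun _ : Fin n => μ)).map
        (fun ω => (√n)⁻¹ * ∑ j, ω.1 j * τ (ω.2 j))
      = (Measure.pi fun _ : Fin n => μ).bind fun x =>
          gaussianReal 0 (sampleMean (fun y => τ y ^ 2) x).toNNReal := by
  rw [map_prod_eq_bind _ _ (by fun_prop)]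
  congr 1 with x : 1
  have hout : (fun w : Fin n → ℝ => (√n)⁻¹ * ∑ j, w j * τ (x j))
      = fun w => ∑ j, w j * ((√n)⁻¹ * τ (x j)) := by
    simp only [Finset.mul_sum, mul_left_comm]
  have hvar : ∑ j, ((1 : NNReal) : ℝ) * ((√n)⁻¹ * τ (x j)) ^ 2
      = sampleMean (fun y => τ y ^ 2) x := by
    simp only [NNReal.coe_one, one_mul, mul_pow, inv_pow, Real.sq_sqrt (Nat.cast_nonneg n),
      ← Finset.mul_sum, sampleMean]
  rw [hout, map_sum_mul_pi_gaussianReal, hvar]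
  simp only [zero_mul, Finset.sum_const_zero]

theorem shallow_nn_ks_bound_general (hmeas : Measurable τ) (hτ : MemLp τ 4 μ) (hn : n ≠ 0) :
    dKS
      (((Measure.pi fun _ : Fin n => gaussianReal 0 1).prod (Measure.pi fun _ : Fin n => μ)).map
        fun ω => (√n)⁻¹ * ∑ j, ω.1 j * τ (ω.2 j))
      (gaussianReal 0 (∫ y, τ y ^ 2 ∂μ).toNNReal)
      ≤ (√n)⁻¹ * (√Var[fun y => τ y ^ 2; μ] / (2 * ∫ y, τ y ^ 2 ∂μ)) := by
  have hsq : MemLp (fun y => τ y ^ 2) 2 μ := memLp_sq (by norm_num; exact hτ)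
  have hmix := dKS_bind_gaussianReal_le (P := Measure.pi fun _ : Fin n => μ)
    (V := sampleMean fun y => τ y ^ 2) (by unfold sampleMean; fun_prop)
    (fun x => by unfold sampleMean; positivity) (memLp_sampleMean hsq)
  rw [integral_sampleMean hn (hsq.integrable one_le_two), variance_sampleMean hsq,
    Real.sqrt_mul (by positivity), Real.sqrt_inv, mul_div_assoc] at hmix
  rwa [map_shallow_network_eq_bind hmeas]

end RandomFeatures

section PolynomialGrowth

theorem memLp_abs_rpow_gaussianReal (m : ℝ) (v : NNReal) {γ : ℝ} (hγ : 0 ≤ γ) {p : ENNReal}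
    (hp : p ≠ ⊤) : MemLp (fun z : ℝ => |z| ^ γ) p (gaussianReal m v) := by
  rcases hγ.eq_or_lt with rfl | hγ
  · simpa only [Real.rpow_zero] using memLp_const 1
  have hid := memLp_id_gaussianReal' (μ := m) (v := v) (p * ENNReal.ofReal γ)
    (ENNReal.mul_ne_top hp ENNReal.ofReal_ne_top)
  have h := hid.norm_rpow_div (ENNReal.ofReal γ)
  rwa [ENNReal.mul_div_cancel_right (ENNReal.ofReal_pos.mpr hγ).ne' ENNReal.ofReal_ne_top,
    ENNReal.toReal_ofReal hγ.le] at h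

theorem sqrt_variance_sq_le {E : Type*} {mE : MeasurableSpace E} {μ : Measure E}
    [IsProbabilityMeasure μ] {τ g : E → ℝ} (hτ : AEStronglyMeasurable τ μ) (hg : MemLp g 4 μ)
    (hτg : ∀ y, |τ y| ≤ g y) :
    √Var[fun y => τ y ^ 2; μ] ≤ ((∫ y, g y ^ 4 ∂μ) ^ ((1 : ℝ) / 4)) ^ 2 := by
  have hg₀ (y : E) : 0 ≤ g y := (abs_nonneg _).trans (hτg y)
  have hpow : Integrable (fun y => g y ^ 4) μ := by
    have hg' : MemLp g (4 : ℕ) μ := mod_cast hg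
    simpa only [Real.norm_of_nonneg (hg₀ _)] using hg'.integrable_norm_pow four_ne_zero
  have hpow_le (y : E) : (τ y ^ 2) ^ 2 ≤ g y ^ 4 := by
    calc (τ y ^ 2) ^ 2 = |τ y| ^ 4 := by rw [← sq_abs (τ y), ← pow_mul]
      _ ≤ g y ^ 4 := pow_le_pow_left₀ (abs_nonneg _) (hτg y) 4
  have hroot : ((∫ y, g y ^ 4 ∂μ) ^ ((1 : ℝ) / 4)) ^ 2 = √(∫ y, g y ^ 4 ∂μ) := by
    rw [Real.sqrt_eq_rpow, ← Real.rpow_mul_natCast (integral_nonneg fun y => pow_nonneg (hg₀ y) 4)]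
    norm_num
  have hvar : Var[fun y => τ y ^ 2; μ] ≤ ∫ y, (τ y ^ 2) ^ 2 ∂μ :=
    variance_le_expectation_sq (hτ.pow 2)
  calc √Var[fun y => τ y ^ 2; μ] ≤ √(∫ y, (τ y ^ 2) ^ 2 ∂μ) := Real.sqrt_le_sqrt hvar
    _ ≤ √(∫ y, g y ^ 4 ∂μ) := Real.sqrt_le_sqrt <|
        integral_mono_of_nonneg (ae_of_all _ fun _ => sq_nonneg _) hpow (ae_of_all _ hpow_le)
    _ = ((∫ y, g y ^ 4 ∂μ) ^ ((1 : ℝ) / 4)) ^ 2 := hroot.symm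

theorem div_two_mul_le_two_div_mul {x y s : ℝ} (hx : 0 ≤ x) (hxy : x ≤ y) (hs : 0 ≤ s) :
    x / (2 * s) ≤ 2 / s * √(3 * (1 + √2)) * y := by
  have hroot : 1 ≤ √(3 * (1 + √2)) := Real.one_le_sqrt.mpr (by linarith [Real.sqrt_nonneg 2])
  calc x / (2 * s) = 1 / 2 / s * 1 * x := by ring
    _ ≤ 2 / s * √(3 * (1 + √2)) * y := by gcongr; norm_num

end PolynomialGrowth

theorem shallow_nn_ks_bound
    (τ : ℝ → ℝ) (a b γ : ℝ) (ha : 0 ≤ a) (hb : 0 ≤ b) (hγ : 0 ≤ γ)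
    (hτ : ContDiff ℝ 2 τ)
    (hτ0 : ∀ x : ℝ, |τ x| ≤ a + b * |x| ^ γ)
    (hτ1 : ∀ x : ℝ, |deriv τ x| ≤ a + b * |x| ^ γ)
    (hτ2 : ∀ x : ℝ, |deriv (deriv τ) x| ≤ a + b * |x| ^ γ)
    (n : ℕ) (hn : 1 ≤ n) :
    dKS
      (Measure.map
        (fun ω : (Fin n → ℝ) × (Fin n → ℝ) =>
          (Real.sqrt n)⁻¹ * ∑ j, ω.1 j * τ (ω.2 j))
        ((Measure.pi fun _ : Fin n => gaussianReal 0 1).prod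
          (Measure.pi fun _ : Fin n => gaussianReal 0 1)))
      (gaussianReal 0 (∫ z, (τ z) ^ 2 ∂gaussianReal 0 1).toNNReal)
      ≤ (Real.sqrt n)⁻¹
        * (2 / (∫ z, (τ z) ^ 2 ∂gaussianReal 0 1))
        * Real.sqrt (3 * (1 + Real.sqrt 2))
        * ((∫ z, (a + b * |z| ^ γ) ^ 4 ∂gaussianReal 0 1) ^ ((1:ℝ)/4)) ^ 2 := by
  have henv : MemLp (fun z : ℝ => a + b * |z| ^ γ) 4 (gaussianReal 0 1) :=
    (memLp_const a).add ((memLp_abs_rpow_gaussianReal 0 1 hγ ENNReal.ofNat_ne_top).const_mul b)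
  have hmeas : AEStronglyMeasurable τ (gaussianReal 0 1) := hτ.continuous.aestronglyMeasurable
  refine (shallow_nn_ks_bound_general hτ.continuous.measurable
    (henv.mono' hmeas (ae_of_all _ hτ0)) (by lia)).trans ?_
  rw [mul_assoc _ (2 / _), mul_assoc]
  gcongr
  exact div_two_mul_le_two_div_mul (Real.sqrt_nonneg _) (sqrt_variance_sq_le hmeas henv hτ0)
    (integral_nonneg fun z => sq_nonneg _)
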